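/- Let B = diag(b₁,...,bₙ) be a real diagonal n×n matrix and κ ∈ ℝ. Suppose X, P : ℝ → M_{n,r}(ℝ) are differentiable curves which at time t satisfy the constraints XᵀX = I_r, XᵀP + PᵀX = 0, and the equations X' = P - (1+2κ)XPᵀX, P' = (1+2κ)PXᵀP - B²X + 2BXXᵀBX + XΛ, where Λ = XᵀB²X - 2XᵀBXXᵀBX - PᵀP. Then at time t one has d/dt(XᵀX) = 0 and d/dt(XᵀP + PᵀX) = 0; i.e., this Lagrange multiplier Λ makes the flow of the fourth-degree potential system tangent to the constraint variety. -/

import Mathlib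

open Matrix

/-- Entrywise derivative of a matrix-valued curve. -/
def HasMatDerivAt {m k : Type*} {E : Type*} [NormedAddCommGroup E] [NormedSpace ℝ E]
    (F : ℝ → Matrix m k E) (F' : Matrix m k E) (t : ℝ) : Prop :=
  ∀ i j, HasDerivAt (fun s => F s i j) (F' i j) t

/-!
The velocity gives `d/dt(XᵀX) = (1 - c) • (XᵀP + PᵀX)` with `c = 1 + 2κ`, which vanishes on the
constraint variety. For any force `F`, the terms `±c • (XᵀP)²` in `d/dt(XᵀP)` cancel and leave
`XᵀF + Λ + PᵀP`. So the second constraint is preserved as soon as this matrix is skew-symmetric,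
and the multiplier of the fourth-degree potential makes it vanish.
-/

namespace HasMatDerivAt

variable {l m k : Type*} {t : ℝ}

section NormedSpace

variable {E : Type*} [NormedAddCommGroup E] [NormedSpace ℝ E]
  {F G : ℝ → Matrix m k E} {F' G' : Matrix m k E}

theorem transpose (hF : HasMatDerivAt F F' t) : HasMatDerivAt (fun s => (F s)ᵀ) F'ᵀ t :=
  fun i j => hF j i

theorem add (hF : HasMatDerivAt F F' t) (hG : HasMatDerivAt G G' t) :
    HasMatDerivAt (fun s => F s + G s) (F' + G') t :=
  fun i j => (hF i j).add (hG i j)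

end NormedSpace

theorem mul {A : Type*} [NormedRing A] [NormedAlgebra ℝ A] [Fintype m]
    {F : ℝ → Matrix l m A} {G : ℝ → Matrix m k A} {F' : Matrix l m A} {G' : Matrix m k A}
    (hF : HasMatDerivAt F F' t) (hG : HasMatDerivAt G G' t) :
    HasMatDerivAt (fun s => F s * G s) (F' * G t + F t * G') t := by
  intro i j
  simp only [Matrix.mul_apply, Matrix.add_apply, ← Finset.sum_add_distrib]
  exact HasDerivAt.fun_sum fun p _ => (hF i p).mul (hG p j)

end HasMatDerivAt

section Algebra

variable {n r R : Type*} [Fintype n] [Fintype r] [CommRing R]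

/-- The velocity `dX/dt` prescribed by the equations of motion on `T*V(n,r)`. The parameter `c` is
`1 + 2κ`, where `κ` selects the kinetic energy `T_κ`. -/
def stiefelVelocity (c : R) (X P : Matrix n r R) : Matrix n r R :=
  P - c • (X * (Pᵀ * X))

/-- The momentum rate `dP/dt` prescribed by the equations of motion on `T*V(n,r)` under a force `F`
(minus the gradient of the potential in the ambient matrix space) with Lagrange multiplier `Λ`. -/
def stiefelMomentumRate (c : R) (X P F : Matrix n r R) (Λ : Matrix r r R) : Matrix n r R :=
  c • (P * (Xᵀ * P)) + F + X * Λ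

/-- The force `-∇V` of the fourth-degree potential `V(X) = ½tr(XᵀB²X) - ½tr(XᵀBXXᵀBX)`, where the
gradient is computed for symmetric `B`. -/
def fourthDegreeForce (B : Matrix n n R) (X : Matrix n r R) : Matrix n r R :=
  (2 : R) • (B * X * (Xᵀ * B * X)) - B * B * X

theorem stiefelMomentumRate_fourthDegreeForce (c : R) (B : Matrix n n R) (X P : Matrix n r R)
    (Λ : Matrix r r R) :
    stiefelMomentumRate c X P (fourthDegreeForce B X) Λ
      = c • (P * (Xᵀ * P)) - B * B * X + (2 : R) • (B * X * (Xᵀ * B * X)) + X * Λ := by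
  rw [stiefelMomentumRate, fourthDegreeForce]
  abel

theorem transpose_mul_fourthDegreeForce (B : Matrix n n R) (X : Matrix n r R) :
    Xᵀ * fourthDegreeForce B X
      = (2 : R) • (Xᵀ * B * X * (Xᵀ * B * X)) - Xᵀ * (B * B) * X := by
  simp only [fourthDegreeForce, Matrix.mul_sub, Matrix.mul_smul, Matrix.mul_assoc]

variable {X : Matrix n r R} [DecidableEq r]

theorem transpose_mul_stiefelVelocity (hX : Xᵀ * X = 1) (c : R) (P : Matrix n r R) :
    Xᵀ * stiefelVelocity c X P = Xᵀ * P - c • (Pᵀ * X) := by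
  rw [stiefelVelocity, Matrix.mul_sub, Matrix.mul_smul, ← Matrix.mul_assoc Xᵀ X, hX,
    Matrix.one_mul]

theorem stiefelVelocity_transpose_mul_add (hX : Xᵀ * X = 1) (c : R) (P : Matrix n r R) :
    (stiefelVelocity c X P)ᵀ * X + Xᵀ * stiefelVelocity c X P
      = (1 - c) • (Xᵀ * P + Pᵀ * X) := by
  have hT : (stiefelVelocity c X P)ᵀ * X = Pᵀ * X - c • (Xᵀ * P) := by
    simpa only [transpose_mul, transpose_sub, transpose_smul, transpose_transpose] using
      congrArg transpose (transpose_mul_stiefelVelocity hX c P)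
  rw [hT, transpose_mul_stiefelVelocity hX]
  module

theorem stiefelVelocity_transpose_mul_add_stiefelMomentumRate (hX : Xᵀ * X = 1) (c : R)
    (P F : Matrix n r R) (Λ : Matrix r r R) :
    (stiefelVelocity c X P)ᵀ * P + Xᵀ * stiefelMomentumRate c X P F Λ
      = Xᵀ * F + Λ + Pᵀ * P := by
  have hV : (stiefelVelocity c X P)ᵀ * P = Pᵀ * P - c • (Xᵀ * P * (Xᵀ * P)) := by
    simp only [stiefelVelocity, transpose_sub, transpose_smul, transpose_mul,
      transpose_transpose, Matrix.sub_mul, Matrix.smul_mul, Matrix.mul_assoc]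
  have hW : Xᵀ * stiefelMomentumRate c X P F Λ
      = c • (Xᵀ * P * (Xᵀ * P)) + Xᵀ * F + Λ := by
    simp only [stiefelMomentumRate, Matrix.mul_add, Matrix.mul_smul, ← Matrix.mul_assoc, hX,
      Matrix.one_mul]
  rw [hV, hW]
  abel

end Algebra

section Flow

variable {n r A : Type*} [Fintype n] [Fintype r] [DecidableEq r]
  [NormedCommRing A] [NormedAlgebra ℝ A] {c : A} {X P : ℝ → Matrix n r A} {t : ℝ}

theorem hasMatDerivAt_transpose_mul_self
    (hX : HasMatDerivAt X (stiefelVelocity c (X t) (P t)) t) (hXX : (X t)ᵀ * X t = 1) :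
    HasMatDerivAt (fun s => (X s)ᵀ * X s) ((1 - c) • ((X t)ᵀ * P t + (P t)ᵀ * X t)) t :=
  stiefelVelocity_transpose_mul_add hXX c (P t) ▸ hX.transpose.mul hX

theorem hasMatDerivAt_transpose_mul_momentum {F : Matrix n r A} {Λ : Matrix r r A}
    (hX : HasMatDerivAt X (stiefelVelocity c (X t) (P t)) t)
    (hP : HasMatDerivAt P (stiefelMomentumRate c (X t) (P t) F Λ) t)
    (hXX : (X t)ᵀ * X t = 1) :
    HasMatDerivAt (fun s => (X s)ᵀ * P s) ((X t)ᵀ * F + Λ + (P t)ᵀ * P t) t :=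
  stiefelVelocity_transpose_mul_add_stiefelMomentumRate hXX c (P t) F Λ ▸ hX.transpose.mul hP

theorem fourth_degree_constraints_preserved_general {F : Matrix n r A} {Λ : Matrix r r A}
    (hX : HasMatDerivAt X (stiefelVelocity c (X t) (P t)) t)
    (hP : HasMatDerivAt P (stiefelMomentumRate c (X t) (P t) F Λ) t)
    (hXX : (X t)ᵀ * X t = 1) (hXP : (X t)ᵀ * P t + (P t)ᵀ * X t = 0)
    (hΛ : ((X t)ᵀ * F + Λ + (P t)ᵀ * P t)ᵀ = -((X t)ᵀ * F + Λ + (P t)ᵀ * P t)) :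
    HasMatDerivAt (fun s => (X s)ᵀ * X s) 0 t ∧
      HasMatDerivAt (fun s => (X s)ᵀ * P s + (P s)ᵀ * X s) 0 t := by
  have hdXX := hasMatDerivAt_transpose_mul_self hX hXX
  have hdXP := hasMatDerivAt_transpose_mul_momentum hX hP hXX
  refine ⟨?_, ?_⟩
  · rwa [hXP, smul_zero] at hdXX
  · simpa only [hΛ, add_neg_cancel, transpose_mul, transpose_transpose] using
      hdXP.add hdXP.transpose

end Flow

/-- The Lagrange multiplier `Λ = XᵀB²X - 2XᵀBXXᵀBX - PᵀP` makes
the flow of the fourth-degree potential system on `V(n,r)` tangent to the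
constraint variety `XᵀX = I_r`, `XᵀP + PᵀX = 0`. -/
theorem fourth_degree_constraints_preserved (n r : ℕ)
    (b : Fin n → ℝ) (B : Matrix (Fin n) (Fin n) ℝ) (hB : B = diagonal b) (κ : ℝ)
    (X P : ℝ → Matrix (Fin n) (Fin r) ℝ)
    (X' P' : Matrix (Fin n) (Fin r) ℝ) (t : ℝ)
    (hX : HasMatDerivAt X X' t) (hP : HasMatDerivAt P P' t)
    (hc1 : (X t)ᵀ * X t = 1)
    (hc2 : (X t)ᵀ * P t + (P t)ᵀ * X t = 0)
    (Λ : Matrix (Fin r) (Fin r) ℝ)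
    (hΛ : Λ = (X t)ᵀ * (B * B) * X t
        - (2 : ℝ) • ((X t)ᵀ * B * X t * ((X t)ᵀ * B * X t)) - (P t)ᵀ * P t)
    (heqX : X' = P t - (1 + 2 * κ) • (X t * ((P t)ᵀ * X t)))
    (heqP : P' = (1 + 2 * κ) • (P t * ((X t)ᵀ * P t)) - B * B * X t
        + (2 : ℝ) • (B * X t * ((X t)ᵀ * B * X t)) + X t * Λ) :
    HasMatDerivAt (fun s => (X s)ᵀ * X s) 0 t ∧
      HasMatDerivAt (fun s => (X s)ᵀ * P s + (P s)ᵀ * X s) 0 t := by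
  have hM : (X t)ᵀ * fourthDegreeForce B (X t) + Λ + (P t)ᵀ * P t = 0 := by
    rw [transpose_mul_fourthDegreeForce, hΛ]; abel
  exact fourth_degree_constraints_preserved_general (heqX ▸ hX)
    (by rwa [stiefelMomentumRate_fourthDegreeForce, ← heqP]) hc1 hc2 (by simp [hM])
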